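/- arXiv:2210.12405 — 2 statements merged into one kernel-verified Lean document; each statement's English description precedes it below -/
import Mathlib

section
/- For all integers d ≥ 2 and n ≥ 1, the number of equivalence classes of d-dimensional extremal (0,1)-matrices of order n is at most n^{n·d·(d−1)} + 1. -/
open Finset

/-- The sum of the entries of `k` over the hyperplane `Γ_{i,j}`. -/
def hypSum {d n : ℕ} (k : (Fin d → Fin n) → ℝ) (i : Fin d) (j : Fin n) : ℝ :=
  ∑ α ∈ Finset.univ.filter (fun α : Fin d → Fin n => α i = j), k α

/-- `k` is a polyplex of weight `W` in the `d`-dimensional (0,1)-matrix `A` of order `n`. -/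
def IsPolyplex {d n : ℕ} (A : (Fin d → Fin n) → Bool) (k : (Fin d → Fin n) → ℝ) (W : ℝ) : Prop :=
  (∀ α, 0 ≤ k α) ∧ (∀ α, A α = false → k α = 0) ∧
  (∀ i j, hypSum k i j ≤ 1) ∧ (∑ α, k α) = W

/-- `k` is a polydiagonal in `A`: a nonnegative weighting of the support whose sum over
every hyperplane equals `1`. -/
def IsPolydiagonal {d n : ℕ} (A : (Fin d → Fin n) → Bool) (k : (Fin d → Fin n) → ℝ) : Prop :=
  (∀ α, 0 ≤ k α) ∧ (∀ α, A α = false → k α = 0) ∧ (∀ i j, hypSum k i j = 1)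

def HasPolydiagonal {d n : ℕ} (A : (Fin d → Fin n) → Bool) : Prop :=
  ∃ k, IsPolydiagonal A k

/-- The matrix obtained from `A` by additionally setting the entry at `β` to `1`. -/
def addEntry {d n : ℕ} (A : (Fin d → Fin n) → Bool) (β : Fin d → Fin n) :
    (Fin d → Fin n) → Bool :=
  fun α => if α = β then true else A α

/-- `A` is extremal: it has no polydiagonal, and adding any entry creates one. -/
def IsExtremal {d n : ℕ} (A : (Fin d → Fin n) → Bool) : Prop :=
  ¬ HasPolydiagonal A ∧ ∀ β, A β = false → HasPolydiagonal (addEntry A β)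

/-- `Λ` is a hyperplane cover of `A`. -/
def IsCover {d n : ℕ} (A : (Fin d → Fin n) → Bool) (Λ : Fin d → Fin n → ℝ) : Prop :=
  (∀ i j, 0 ≤ Λ i j) ∧ ∀ α, A α = true → 1 ≤ ∑ i, Λ i (α i)

/-- The weight of a hyperplane cover. -/
def coverWeight {d n : ℕ} (Λ : Fin d → Fin n → ℝ) : ℝ := ∑ i, ∑ j, Λ i j

/-- `Λ` is an optimal hyperplane cover of `A`: a cover of minimum weight. -/
def IsOptimalCover {d n : ℕ} (A : (Fin d → Fin n) → Bool) (Λ : Fin d → Fin n → ℝ) : Prop :=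
  IsCover A Λ ∧ ∀ Λ', IsCover A Λ' → coverWeight Λ ≤ coverWeight Λ'

/-- `A` is a threshold matrix. -/
def IsThreshold {d n : ℕ} (A : (Fin d → Fin n) → Bool) : Prop :=
  ∃ Λ : Fin d → Fin n → ℝ, (∀ i j, 0 ≤ Λ i j) ∧
    ∀ α, (A α = true ↔ 1 ≤ ∑ i, Λ i (α i))

/-- `A` and `B` are equivalent: `B` is obtained from `A` by permuting directions and
permuting parallel hyperplanes, i.e. `B(α) = A(β)` where `β (π i) = σ i (α i)`. -/
def MatEquiv {d n : ℕ} (A B : (Fin d → Fin n) → Bool) : Prop :=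
  ∃ (π : Equiv.Perm (Fin d)) (σ : Fin d → Equiv.Perm (Fin n)),
    ∀ α, B α = A (fun j => σ (π.symm j) (α (π.symm j)))

/-- The rate of the hyperplane `Γ_{i,j}` of `A`: the number of ones it contains. -/
def rate {d n : ℕ} (A : (Fin d → Fin n) → Bool) (i : Fin d) (j : Fin n) : ℕ :=
  (Finset.univ.filter (fun α : Fin d → Fin n => A α = true ∧ α i = j)).card

/-- The profile of `A`: the multiset of the rates of all its `d·n` hyperplanes. -/
def profile {d n : ℕ} (A : (Fin d → Fin n) → Bool) : Multiset ℕ :=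
  (Finset.univ : Finset (Fin d × Fin n)).val.map (fun p => rate A p.1 p.2)


theorem hyp_total {d n : ℕ} (k : (Fin d → Fin n) → ℝ) (i : Fin d) :
    ∑ j, hypSum k i j = ∑ α, k α := by
  unfold hypSum
  exact Finset.sum_fiberwise Finset.univ (fun α : Fin d → Fin n => α i) k

theorem sum_weight {d n : ℕ} (k : (Fin d → Fin n) → ℝ) (l : Fin d → Fin n → ℝ) :
    ∑ α, k α * ∑ i, l i (α i) = ∑ i, ∑ j, l i j * hypSum k i j := by
  simp_rw [Finset.mul_sum]
  rw [Finset.sum_comm]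
  refine Finset.sum_congr rfl fun i _ => ?_
  rw [← Finset.sum_fiberwise Finset.univ (fun α : Fin d → Fin n => α i)]
  refine Finset.sum_congr rfl fun j _ => ?_
  unfold hypSum
  rw [Finset.mul_sum]
  refine Finset.sum_congr rfl fun α hα => ?_
  rw [Finset.mem_filter] at hα
  rw [hα.2, mul_comm]

/-- Farkas-type separation. -/
theorem exists_weight {d n : ℕ} (hd : 2 ≤ d) (hn : 1 ≤ n) (A : (Fin d → Fin n) → Bool)
    (hA : ¬ HasPolydiagonal A) :
    ∃ l : Fin d → Fin n → ℝ, ∀ α, A α = true → ∑ i, ∑ j, l i j < n * ∑ i, l i (α i) := by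
  classical
  have hn0 : (0 : ℝ) < n := by exact_mod_cast hn
  let L : ((Fin d → Fin n) → ℝ) →ₗ[ℝ] (Fin d × Fin n → ℝ) :=
    { toFun := fun k p => hypSum k p.1 p.2
      map_add' := by
        intro x y; ext p; simp [hypSum, Finset.sum_add_distrib]
      map_smul' := by
        intro c x; ext p; simp [hypSum, Finset.mul_sum] }
  have hL : ∀ k p, L k p = hypSum k p.1 p.2 := fun _ _ => rfl
  let K : Set ((Fin d → Fin n) → ℝ) :=
    stdSimplex ℝ (Fin d → Fin n) ∩ {k | ∀ α, A α = false → k α = 0}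
  have hKc : IsCompact K := by
    refine (isCompact_stdSimplex ℝ (Fin d → Fin n)).inter_right ?_
    simp only [Set.ofPred_forall]
    refine isClosed_iInter fun α => isClosed_iInter fun _ => ?_
    exact isClosed_eq (continuous_apply α) continuous_const
  have hKv : Convex ℝ K := by
    refine (convex_stdSimplex ℝ (Fin d → Fin n)).inter ?_
    intro x hx y hy a b _ _ _ α hα
    simp [hx α hα, hy α hα]
  have hC : IsCompact (Set.image L K) := hKc.image L.continuous_of_finiteDimensional
  have hCv : Convex ℝ (Set.image L K) := hKv.linear_image L
  have hnot : (fun _ => (n : ℝ)⁻¹) ∉ Set.image L K := by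
    rintro ⟨k, ⟨⟨hk0, hk1⟩, hkA⟩, hk⟩
    apply hA
    refine ⟨fun α => n * k α, fun α => mul_nonneg hn0.le (hk0 α), fun α h => ?_, fun i j => ?_⟩
    · simp [hkA α h]
    · have := congrFun hk (i, j)
      rw [hL] at this
      simp only [hypSum] at this ⊢
      rw [← Finset.mul_sum, this]
      field_simp
  obtain ⟨f, u, h1, h2⟩ := geometric_hahn_banach_point_closed hCv hC.isClosed hnot
  have hf : ∀ x : Fin d × Fin n → ℝ, f x = ∑ i, ∑ j, x (i, j) * f (Pi.single (i, j) 1) := by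
    intro x
    rw [← Fintype.sum_prod_type' (f := fun i j => x (i, j) * f (Pi.single (i, j) 1))]
    conv_lhs => rw [pi_eq_sum_univ' x]
    rw [map_sum]
    refine Finset.sum_congr rfl fun p _ => ?_
    rw [map_smul, smul_eq_mul]
  refine ⟨fun i j => f (Pi.single (i, j) 1), fun α hα => ?_⟩
  have hmem : (Pi.single α 1 : (Fin d → Fin n) → ℝ) ∈ K := by
    refine ⟨single_mem_stdSimplex ℝ α, fun β hβ => ?_⟩
    have : β ≠ α := by rintro rfl; simp [hα] at hβ
    simp [this]
  have h3 := h1.trans (h2 _ ⟨_, hmem, rfl⟩)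
  rw [hf, hf] at h3
  simp only [hL] at h3
  have h4 := sum_weight (Pi.single α 1) (fun i j => f (Pi.single (i, j) 1))
  have h5 : ∑ β, (Pi.single α 1 : (Fin d → Fin n) → ℝ) β * ∑ i, f (Pi.single (i, β i) 1)
      = ∑ i, f (Pi.single (i, α i) 1) := by
    rw [Finset.sum_eq_single α]
    · simp
    · intro b _ hb; simp [hb]
    · simp
  rw [h5] at h4
  rw [h4]
  simp_rw [← Finset.mul_sum] at h3
  rw [inv_mul_lt_iff₀ hn0] at h3
  simpa only [mul_comm] using h3

theorem extremal_max {d n : ℕ} {A B : (Fin d → Fin n) → Bool} (hA : IsExtremal A)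
    (hB : ¬ HasPolydiagonal B) (h : ∀ α, A α = true → B α = true) : A = B := by
  funext β
  cases hb : A β with
  | true => exact (h β hb).symm
  | false =>
    cases hc : B β with
    | false => rfl
    | true =>
      exfalso
      obtain ⟨k, h0, h1, h2⟩ := hA.2 β hb
      refine hB ⟨k, h0, fun α hα => h1 α ?_, h2⟩
      unfold addEntry
      have : α ≠ β := by rintro rfl; simp [hc] at hα
      rw [if_neg this]
      by_contra hne
      have := h α (by simpa using hne)
      simp [hα] at this

/-- Extremal matrices are threshold-type. -/
theorem extremal_threshold {d n : ℕ} (hd : 2 ≤ d) (hn : 1 ≤ n) (A : (Fin d → Fin n) → Bool)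
    (hA : IsExtremal A) :
    ∃ l : Fin d → Fin n → ℝ, ∀ α, A α = true ↔ ∑ i, ∑ j, l i j < n * ∑ i, l i (α i) := by
  classical
  obtain ⟨l, hl⟩ := exists_weight hd hn A hA.1
  refine ⟨l, ?_⟩
  have key : A = fun α => decide (∑ i, ∑ j, l i j < n * ∑ i, l i (α i)) := by
    refine extremal_max hA ?_ (fun α h => by simpa using hl α h)
    rintro ⟨k, h0, h1, h2⟩
    have e1 := sum_weight k l
    simp only [h2, mul_one] at e1
    have e2 := hyp_total k (⟨0, by omega⟩ : Fin d)
    simp only [h2] at e2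
    simp only [Finset.sum_const, Finset.card_univ, Fintype.card_fin, nsmul_eq_mul, mul_one] at e2
    have e3 : ∑ α, k α * (n * ∑ i, l i (α i) - ∑ i, ∑ j, l i j) = 0 := by
      simp_rw [mul_sub]
      rw [Finset.sum_sub_distrib, ← Finset.sum_mul, ← e2, sub_eq_zero, ← e1, Finset.mul_sum]
      exact Finset.sum_congr rfl fun α _ => by ring
    have nonneg : ∀ α ∈ Finset.univ,
        0 ≤ k α * (n * ∑ i, l i (α i) - ∑ i, ∑ j, l i j) := by
      intro α _
      by_cases h : ∑ i, ∑ j, l i j < n * ∑ i, l i (α i)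
      · exact mul_nonneg (h0 α) (by linarith)
      · rw [h1 α (by simpa using h)]; simp
    rw [Finset.sum_eq_zero_iff_of_nonneg nonneg] at e3
    have : ∑ α, k α = 0 := by
      refine Finset.sum_eq_zero fun α ha => ?_
      by_cases h : ∑ i, ∑ j, l i j < n * ∑ i, l i (α i)
      · rcases mul_eq_zero.1 (e3 α ha) with h' | h'
        · exact h'
        · linarith
      · exact h1 α (by simpa using h)
    rw [this] at e2
    have : n = 0 := by exact_mod_cast e2
    omega
  intro α
  conv_lhs => rw [key]
  simp

theorem rate_eq {d n : ℕ} (A : (Fin d → Fin n) → Bool) (i : Fin d) (j : Fin n) :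
    (rate A i j : ℝ) = hypSum (fun α => if A α = true then 1 else 0) i j := by
  unfold rate hypSum
  rw [Finset.sum_boole, Finset.filter_filter]
  simp only [and_comm]

/-- Matrices with equal rates: one inclusion. -/
theorem rate_sub {d n : ℕ} (hd : 2 ≤ d) (hn : 1 ≤ n) (A B : (Fin d → Fin n) → Bool)
    (hA : IsExtremal A) (h : ∀ i j, rate A i j = rate B i j) (β : Fin d → Fin n)
    (hβ : A β = true) : B β = true := by
  obtain ⟨l, hl⟩ := extremal_threshold hd hn A hA
  have hh : ∀ i j, hypSum (fun α => if A α = true then (1 : ℝ) else 0) i j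
      = hypSum (fun α => if B α = true then (1 : ℝ) else 0) i j := by
    intro i j; rw [← rate_eq, ← rate_eq, h]
  have e1 : ∑ α, (if A α = true then (1 : ℝ) else 0) * ∑ i, l i (α i)
      = ∑ α, (if B α = true then (1 : ℝ) else 0) * ∑ i, l i (α i) := by
    rw [sum_weight (fun α => if A α = true then (1 : ℝ) else 0) l,
      sum_weight (fun α => if B α = true then (1 : ℝ) else 0) l]
    simp only [hh]
  have e2 : ∑ α, (if A α = true then (1 : ℝ) else 0) = ∑ α, (if B α = true then (1 : ℝ) else 0) := by
    rw [← hyp_total (fun α => if A α = true then (1 : ℝ) else 0) (⟨0, by omega⟩ : Fin d),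
      ← hyp_total (fun α => if B α = true then (1 : ℝ) else 0) (⟨0, by omega⟩ : Fin d)]
    simp only [hh]
  have e3 : ∑ α, ((if A α = true then (1 : ℝ) else 0) - (if B α = true then (1 : ℝ) else 0)) *
      (n * ∑ i, l i (α i) - ∑ i, ∑ j, l i j) = 0 := by
    have : ∀ α, ((if A α = true then (1 : ℝ) else 0) - (if B α = true then (1 : ℝ) else 0)) *
      (n * ∑ i, l i (α i) - ∑ i, ∑ j, l i j) =
      n * ((if A α = true then (1 : ℝ) else 0) * ∑ i, l i (α i)
        - (if B α = true then (1 : ℝ) else 0) * ∑ i, l i (α i))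
      - ((if A α = true then (1 : ℝ) else 0) - (if B α = true then (1 : ℝ) else 0)) *
        (∑ i, ∑ j, l i j) := fun α => by ring
    simp only [this]
    rw [Finset.sum_sub_distrib, ← Finset.mul_sum, ← Finset.sum_mul, Finset.sum_sub_distrib,
      Finset.sum_sub_distrib, e1, e2]
    ring
  have nonneg : ∀ α ∈ Finset.univ,
      0 ≤ ((if A α = true then (1 : ℝ) else 0) - (if B α = true then (1 : ℝ) else 0)) *
      (n * ∑ i, l i (α i) - ∑ i, ∑ j, l i j) := by
    intro α _
    by_cases ha : A α = true
    · have := (hl α).1 ha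
      refine mul_nonneg ?_ (by linarith)
      rw [if_pos ha]; split_ifs <;> norm_num
    · have h' := not_lt.1 (fun h => ha ((hl α).2 h))
      refine mul_nonneg_of_nonpos_of_nonpos ?_ (by linarith)
      rw [if_neg ha]; split_ifs <;> norm_num
  rw [Finset.sum_eq_zero_iff_of_nonneg nonneg] at e3
  by_contra hb
  have := e3 β (Finset.mem_univ _)
  rw [if_pos hβ, if_neg hb] at this
  have := (hl β).1 hβ
  linarith

theorem zero_rate {d n : ℕ} (A : (Fin d → Fin n) → Bool) (hA : IsExtremal A) (i : Fin d)
    (j : Fin n) (h : rate A i j = 0) : A = fun α => decide (α i ≠ j) := by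
  apply extremal_max hA
  · rintro ⟨k, _, h1, h2⟩
    have := h2 i j
    unfold hypSum at this
    rw [Finset.sum_eq_zero] at this
    · norm_num at this
    · intro α hα
      exact h1 α (by simpa using hα)
  · intro α hα
    unfold rate at h
    rw [Finset.card_eq_zero, Finset.filter_eq_empty_iff] at h
    have := h (Finset.mem_univ α)
    simp [hα] at this
    simpa using this

theorem rate_le {d n : ℕ} (A : (Fin d → Fin n) → Bool) (i : Fin d) (j : Fin n) :
    rate A i j ≤ n ^ (d - 1) := by
  classical
  have hc : Fintype.card ({x : Fin d // x ≠ i} → Fin n) = n ^ (d - 1) := by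
    rw [Fintype.card_fun, Fintype.card_fin, Fintype.card_subtype_compl]
    simp
  rw [← hc, ← Finset.card_univ]
  unfold rate
  refine Finset.card_le_card_of_injOn (fun α x => α x.1) (fun _ _ => Finset.mem_coe.2 (Finset.mem_univ _)) ?_
  intro α hα β hβ hab
  simp only [Finset.coe_filter, Finset.mem_univ, true_and, Set.mem_ofPred_eq] at hα hβ
  funext x
  by_cases hx : x = i
  · subst hx; rw [hα.2, hβ.2]
  · exact congrFun hab ⟨x, hx⟩

/-- The number of equivalence classes of d-dimensional extremal matrices of order n is at
most n^(n d (d-1)) + 1. -/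
theorem stmt_7 (d n : ℕ) (hd : 2 ≤ d) (hn : 1 ≤ n) :
    Nat.card (Quot (fun A B : {A : (Fin d → Fin n) → Bool // IsExtremal A} =>
      MatEquiv A.1 B.1)) ≤ n ^ (n * d * (d - 1)) + 1 := by
  classical
  let X := {A : (Fin d → Fin n) → Bool // IsExtremal A}
  let g : X → Option (Fin d × Fin n → Fin (n ^ (d - 1))) := fun A =>
    if ∃ i j, rate A.1 i j = 0 then none
    else some fun p => ⟨rate A.1 p.1 p.2 - 1, by
      have := rate_le A.1 p.1 p.2
      have : 0 < n ^ (d - 1) := Nat.pow_pos hn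
      omega⟩
  have hg : ∀ A B : X, g A = g B → MatEquiv A.1 B.1 := by
    intro A B hAB
    by_cases ha : ∃ i j, rate A.1 i j = 0
    · by_cases hb : ∃ i j, rate B.1 i j = 0
      · obtain ⟨i, j, hij⟩ := ha
        obtain ⟨i', j', hij'⟩ := hb
        refine ⟨Equiv.swap i i', fun _ => Equiv.swap j j', fun α => ?_⟩
        rw [zero_rate A.1 A.2 i j hij, zero_rate B.1 B.2 i' j' hij']
        simp only [Equiv.symm_swap, Equiv.swap_apply_left]
        rw [decide_eq_decide, not_iff_not, Equiv.swap_apply_eq_iff, Equiv.swap_apply_left]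
      · simp [g, ha, hb] at hAB
    · by_cases hb : ∃ i j, rate B.1 i j = 0
      · simp [g, ha, hb] at hAB
      · simp only [g, if_neg ha, if_neg hb, Option.some.injEq] at hAB
        push Not at ha hb
        have hr : ∀ i j, rate A.1 i j = rate B.1 i j := by
          intro i j
          have h1 := congrArg Fin.val (congrFun hAB (i, j))
          have h2 := ha i j
          have h3 := hb i j
          simp only at h1
          omega
        refine ⟨1, fun _ => 1, fun α => ?_⟩
        rw [Bool.eq_iff_iff]
        exact ⟨rate_sub hd hn B.1 A.1 B.2 (fun i j => (hr i j).symm) α,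
          rate_sub hd hn A.1 B.1 A.2 hr α⟩
  have hcard : Nat.card (Option (Fin d × Fin n → Fin (n ^ (d - 1))))
      = n ^ (n * d * (d - 1)) + 1 := by
    rw [Nat.card_eq_fintype_card, Fintype.card_option, Fintype.card_fun, Fintype.card_prod]
    simp only [Fintype.card_fin]
    rw [← pow_mul]
    congr 2
    ring
  rw [← hcard]
  refine Nat.card_le_card_of_injective (fun q => g (Quot.out q)) ?_
  intro q q' hq
  rw [← Quot.out_eq q, ← Quot.out_eq q']
  exact Quot.sound (hg _ _ hq)
end

section
/- Let Λ₁ be the essential-weight tuple (13/25, 7/25, 6/25, 6/25, 4/25, 4/25, 4/25, 3/25, 2/25) and Λ₂ the tuple (13/25, 7/25, 6/25, 6/25, 4/25, 4/25, 4/25, 2/25, 3/25) (the last two coordinates interchanged). Then the 9-dimensional threshold matrices A(Λ₁) and A(Λ₂) of order 2 coincide; this matrix A is extremal; and both the d×2 tables corresponding to Λ₁ and to Λ₂ are optimal hyperplane covers of A. In particular, there exists an extremal matrix whose optimal hyperplane cover is not unique. -/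
open Finset

/-- The first essential-weight tuple. -/
noncomputable def v₁ : Fin 9 → ℝ :=
  ![13/25, 7/25, 6/25, 6/25, 4/25, 4/25, 4/25, 3/25, 2/25]

/-- The second essential-weight tuple: the last two coordinates interchanged. -/
noncomputable def v₂ : Fin 9 → ℝ :=
  ![13/25, 7/25, 6/25, 6/25, 4/25, 4/25, 4/25, 2/25, 3/25]

/-- The d×2 table corresponding to an essential-weight tuple. -/
noncomputable def tableOf {d : ℕ} (v : Fin d → ℝ) : Fin d → Fin 2 → ℝ :=
  fun i j => if j = 0 then v i else 0

/-- Indicator that a coordinate is zero. -/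
noncomputable def ind (j : Fin 2) : ℝ := if j = 0 then 1 else 0

lemma ind_cases (j : Fin 2) : ind j = 0 ∨ ind j = 1 := by
  unfold ind; split_ifs <;> simp

lemma weight_v₁ (α : Fin 9 → Fin 2) : ∑ i, tableOf v₁ i (α i) =
    (13 * ind (α 0) + 7 * ind (α 1) + 6 * ind (α 2) + 6 * ind (α 3) + 4 * ind (α 4)
      + 4 * ind (α 5) + 4 * ind (α 6) + 3 * ind (α 7) + 2 * ind (α 8)) / 25 := by
  have h : ∀ i j, tableOf v₁ i j = v₁ i * ind j := by
    intro i j; simp [tableOf, ind]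
  simp only [h]
  simp only [Fin.sum_univ_succ, v₁]
  simp [Fin.succ]
  ring

lemma weight_v₂ (α : Fin 9 → Fin 2) : ∑ i, tableOf v₂ i (α i) =
    (13 * ind (α 0) + 7 * ind (α 1) + 6 * ind (α 2) + 6 * ind (α 3) + 4 * ind (α 4)
      + 4 * ind (α 5) + 4 * ind (α 6) + 2 * ind (α 7) + 3 * ind (α 8)) / 25 := by
  have h : ∀ i j, tableOf v₂ i j = v₂ i * ind j := by
    intro i j; simp [tableOf, ind]
  simp only [h]
  simp only [Fin.sum_univ_succ, v₂]
  simp [Fin.succ]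
  ring

/-- Natural-number form of the indicator. -/
def indN (j : Fin 2) : ℕ := if j = 0 then 1 else 0

lemma ind_eq (j : Fin 2) : ind j = (indN j : ℝ) := by
  unfold ind indN; split_ifs <;> simp

lemma indN_rev (j : Fin 2) : indN (Fin.rev j) + indN j = 1 := by
  revert j; decide

lemma iff_v₁ (α : Fin 9 → Fin 2) : 1 ≤ ∑ i, tableOf v₁ i (α i) ↔
    25 ≤ 13 * indN (α 0) + 7 * indN (α 1) + 6 * indN (α 2) + 6 * indN (α 3) + 4 * indN (α 4)
      + 4 * indN (α 5) + 4 * indN (α 6) + 3 * indN (α 7) + 2 * indN (α 8) := by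
  rw [weight_v₁, le_div_iff₀ (by norm_num)]
  simp only [ind_eq]
  norm_cast

lemma iff_v₂ (α : Fin 9 → Fin 2) : 1 ≤ ∑ i, tableOf v₂ i (α i) ↔
    25 ≤ 13 * indN (α 0) + 7 * indN (α 1) + 6 * indN (α 2) + 6 * indN (α 3) + 4 * indN (α 4)
      + 4 * indN (α 5) + 4 * indN (α 6) + 2 * indN (α 7) + 3 * indN (α 8) := by
  rw [weight_v₂, le_div_iff₀ (by norm_num)]
  simp only [ind_eq]
  norm_cast

set_option maxRecDepth 100000 in
lemma swap_iff : ∀ a b c d e f g x y : Fin 2,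
    (25 ≤ 13 * indN a + 7 * indN b + 6 * indN c + 6 * indN d + 4 * indN e
      + 4 * indN f + 4 * indN g + 3 * indN x + 2 * indN y) ↔
    (25 ≤ 13 * indN a + 7 * indN b + 6 * indN c + 6 * indN d + 4 * indN e
      + 4 * indN f + 4 * indN g + 2 * indN x + 3 * indN y) := by
  decide

/-- An entry together with its antipode forms a polydiagonal. -/
lemma hasPolydiagonal_of_antipode {d : ℕ} (A : (Fin d → Fin 2) → Bool) (β : Fin d → Fin 2)
    (h1 : A β = true) (h2 : A (fun i => Fin.rev (β i)) = true) : HasPolydiagonal A := by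
  refine ⟨fun α => (if α = β then 1 else 0) + (if α = (fun i => Fin.rev (β i)) then 1 else 0),
    ?_, ?_, ?_⟩
  · intro α
    dsimp only
    split_ifs <;> norm_num
  · intro α hα
    have e1 : α ≠ β := by rintro rfl; simp [h1] at hα
    have e2 : α ≠ (fun i => Fin.rev (β i)) := by rintro rfl; simp [h2] at hα
    simp [e1, e2]
  · intro i j
    unfold hypSum
    rw [Finset.sum_add_distrib, Finset.sum_ite_eq', Finset.sum_ite_eq']
    simp only [Finset.mem_filter, Finset.mem_univ, true_and]
    generalize β i = b
    fin_cases b <;> fin_cases j <;> simp [Fin.rev]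

/-- A matrix with a cover of weight less than two has no polydiagonal. -/
lemma no_polydiagonal {d : ℕ} (i₀ : Fin d) (A : (Fin d → Fin 2) → Bool) (Λ : Fin d → Fin 2 → ℝ)
    (hc : IsCover A Λ) (hw : coverWeight Λ < 2) : ¬ HasPolydiagonal A := by
  rintro ⟨k, h0, hs, h1⟩
  have htot : ∑ α, k α = 2 := by
    have a0 := h1 i₀ 0
    have a1 := h1 i₀ 1
    unfold hypSum at a0 a1
    have := Finset.sum_fiberwise Finset.univ (fun α : Fin d → Fin 2 => α i₀) k
    rw [Fin.sum_univ_two, a0, a1] at this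
    linarith
  have hle : ∑ α, k α ≤ ∑ α, k α * ∑ i, Λ i (α i) := by
    apply Finset.sum_le_sum
    intro α _
    by_cases h : A α = true
    · nlinarith [h0 α, hc.2 α h]
    · rw [hs α (by simpa using h)]; simp
  have heq : ∑ α, k α * ∑ i, Λ i (α i) = coverWeight Λ := by
    unfold coverWeight
    simp only [Finset.mul_sum]
    rw [Finset.sum_comm]
    refine Finset.sum_congr rfl fun i _ => ?_
    rw [← Finset.sum_fiberwise Finset.univ (fun α : Fin d → Fin 2 => α i)]
    refine Finset.sum_congr rfl fun j _ => ?_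
    have hh : ∀ α ∈ Finset.univ.filter (fun α : Fin d → Fin 2 => α i = j),
        k α * Λ i (α i) = k α * Λ i j := by
      intro α hα
      rw [(Finset.mem_filter.mp hα).2]
    rw [Finset.sum_congr rfl hh, ← Finset.sum_mul]
    have := h1 i j
    unfold hypSum at this
    rw [this, one_mul]
  linarith

lemma coverWeight_v₁ : coverWeight (tableOf v₁) = 49 / 25 := by
  simp only [coverWeight, Fin.sum_univ_succ, tableOf, v₁]
  simp
  norm_num

lemma coverWeight_v₂ : coverWeight (tableOf v₂) = 49 / 25 := by
  simp only [coverWeight, Fin.sum_univ_succ, tableOf, v₂]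
  simp
  norm_num

lemma tableOf_nonneg {d : ℕ} (v : Fin d → ℝ) (h : ∀ i, 0 ≤ v i) (i : Fin d) (j : Fin 2) :
    0 ≤ tableOf v i j := by
  unfold tableOf; split_ifs
  · exact h i
  · exact le_rfl

/-- Every cover of the matrix has weight at least `49/25` (dual certificate). -/
lemma lower_bound (A : (Fin 9 → Fin 2) → Bool)
    (hA : ∀ α, A α = true ↔ 1 ≤ ∑ i, tableOf v₁ i (α i))
    (Λ : Fin 9 → Fin 2 → ℝ) (hΛ : IsCover A Λ) : 49 / 25 ≤ coverWeight Λ := by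
  obtain ⟨hn, hc⟩ := hΛ
  have h0 := hc ![1, 1, 0, 0, 1, 0, 0, 0, 0] (by
    rw [hA, iff_v₁]; decide)
  have h1 := hc ![1, 1, 0, 0, 0, 1, 0, 0, 0] (by
    rw [hA, iff_v₁]; decide)
  have h2 := hc ![1, 1, 0, 0, 0, 0, 1, 0, 0] (by
    rw [hA, iff_v₁]; decide)
  have h3 := hc ![1, 0, 1, 0, 0, 0, 0, 1, 1] (by
    rw [hA, iff_v₁]; decide)
  have h4 := hc ![1, 0, 0, 1, 0, 0, 0, 1, 1] (by
    rw [hA, iff_v₁]; decide)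
  have h5 := hc ![0, 1, 1, 1, 0, 0, 0, 1, 1] (by
    rw [hA, iff_v₁]; decide)
  have h6 := hc ![0, 1, 0, 0, 1, 1, 1, 1, 1] (by
    rw [hA, iff_v₁]; decide)
  have h7 := hc ![0, 0, 1, 1, 1, 1, 1, 0, 0] (by
    rw [hA, iff_v₁]; decide)
  have n0 := hn 0 1
  have n1 := hn 1 1
  have n2 := hn 2 1
  have n3 := hn 3 1
  have n4 := hn 4 1
  have n5 := hn 5 1
  have n6 := hn 6 1
  have n7 := hn 7 1
  have n8 := hn 8 1
  simp [Fin.sum_univ_succ, Fin.succ] at h0 h1 h2 h3 h4 h5 h6 h7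
  simp [coverWeight, Fin.sum_univ_succ, Fin.succ]
  linarith

/-- The threshold matrices A(Λ₁) and A(Λ₂) coincide, this matrix is extremal, and both
tables are optimal hyperplane covers of it (which are distinct): an extremal matrix whose
optimal hyperplane cover is not unique. -/
theorem stmt_8 (A B : (Fin 9 → Fin 2) → Bool)
    (hA : ∀ α, A α = true ↔ 1 ≤ ∑ i, tableOf v₁ i (α i))
    (hB : ∀ α, B α = true ↔ 1 ≤ ∑ i, tableOf v₂ i (α i)) :
    A = B ∧ IsExtremal A ∧ IsOptimalCover A (tableOf v₁) ∧ IsOptimalCover A (tableOf v₂) ∧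
      tableOf v₁ ≠ tableOf v₂ := by
  have hAB : A = B := by
    funext α
    rw [Bool.eq_iff_iff, hA, hB, iff_v₁, iff_v₂]
    exact swap_iff _ _ _ _ _ _ _ _ _
  have hc1 : IsCover A (tableOf v₁) :=
    ⟨tableOf_nonneg _ (by intro i; fin_cases i <;> norm_num [v₁]), fun α h => (hA α).1 h⟩
  have hc2 : IsCover A (tableOf v₂) :=
    ⟨tableOf_nonneg _ (by intro i; fin_cases i <;> norm_num [v₂]),
      fun α h => (hB α).1 (hAB ▸ h)⟩
  refine ⟨hAB, ⟨no_polydiagonal 0 A _ hc1 (by rw [coverWeight_v₁]; norm_num), ?_⟩,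
    ⟨hc1, fun Λ' h => coverWeight_v₁ ▸ lower_bound A hA Λ' h⟩,
    ⟨hc2, fun Λ' h => coverWeight_v₂ ▸ lower_bound A hA Λ' h⟩, ?_⟩
  · intro β hβ
    have hr : A (fun i => Fin.rev (β i)) = true := by
      have h := hA β
      rw [hβ, iff_v₁] at h
      rw [hA, iff_v₁]
      have := fun i => indN_rev (β i)
      have r0 := this 0
      have r1 := this 1
      have r2 := this 2
      have r3 := this 3
      have r4 := this 4
      have r5 := this 5
      have r6 := this 6
      have r7 := this 7
      have r8 := this 8
      simp only [Bool.false_eq_true, false_iff] at h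
      omega
    apply hasPolydiagonal_of_antipode _ β
    · simp [addEntry]
    · unfold addEntry
      split_ifs
      · rfl
      · exact hr
  · intro h
    have := congrFun (congrFun h 7) 0
    have h2 : (3 / 25 : ℝ) = 2 / 25 := this
    norm_num at h2
end
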